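/- Let ν ≥ 1 be an integer and (M_k)_{k∈ℕ} a sequence of positive reals satisfying (M.0), (M.2) with constants A ≥ 1, H ≥ 1 and (G), with associated function M(r) := sup_{k∈ℕ} log(r^{νk}/M_{νk}). Let (λ_l)_{l≥1} be positive reals with λ_l ≥ λ₁ > 0 for all l and ∑_{l≥1} λ_l^{−p₀} < ∞ for some p₀ ∈ ℕ, and let (b_l)_{l≥1} be nonnegative reals such that for every L > 0 there exists K_L > 0 with b_l ≤ K_L·exp(M(L·λ_l^{1/ν})) for all l ≥ 1. Then for every L > 0 the series ∑_{l≥1} exp(−M(L·λ_l^{1/ν}))·b_l converges. -/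

import Mathlib

/-- The associated function `M(r) = sup_{k ∈ ℕ} log ( r^{νk} / M_{νk} )`. -/
noncomputable def assocM (ν : ℕ) (Mk : ℕ → ℝ) (r : ℝ) : ℝ :=
  ⨆ k : ℕ, Real.log (r ^ (ν * k) / Mk (ν * k))

/-!
The terms of `exp (M r) = sup_k r ^ (νk) / M_{νk}` give, for each fixed `p`, the decay
`exp (-M r) ≤ M_{νp} / r ^ (νp)`. Squaring the terms and using (M.2) gives
`exp (M r) ^ 2 ≤ A * exp (M (H r))`, so enlarging the radius by the factor `H` absorbs the growth
of `b` and leaves a spare factor: with `r = (L / H) * λ ^ (1 / ν)`,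
`exp (-M (H r)) * b ≤ K * exp (-M (H r)) * exp (M r) ≤ A * K * exp (-M r)`, which is `O(λ ^ (-p))`.
-/

open Real

lemma pow_div_le_mul_exp_of_factorial_le {C l r m : ℝ} {n : ℕ} (hC : 0 ≤ C) (hlr : 0 ≤ l * r)
    (hr : 0 ≤ r) (hm : 0 < m) (h : (n.factorial : ℝ) ≤ C * l ^ n * m) :
    r ^ n / m ≤ C * exp (l * r) := by
  have hfac : (0 : ℝ) < n.factorial := mod_cast n.factorial_pos
  calc r ^ n / m ≤ C * ((l * r) ^ n / n.factorial) := by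
        rw [← mul_div_assoc, div_le_div_iff₀ hm hfac]
        calc r ^ n * n.factorial ≤ r ^ n * (C * l ^ n * m) := by gcongr
          _ = C * (l * r) ^ n * m := by ring
    _ ≤ C * exp (l * r) := by gcongr; exact pow_div_factorial_le_exp _ hlr n

lemma sq_pow_div_le_mul_pow_div {A H r m₁ m₂ : ℝ} {n : ℕ} (hm₁ : 0 < m₁)
    (hm₂ : 0 < m₂) (hM2 : m₂ ≤ A * H ^ (2 * n) * m₁ ^ 2) :
    (r ^ n / m₁) ^ 2 ≤ A * ((H * r) ^ (2 * n) / m₂) := by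
  rw [div_pow, ← mul_div_assoc, div_le_div_iff₀ (by positivity) hm₂]
  calc (r ^ n) ^ 2 * m₂ ≤ (r ^ n) ^ 2 * (A * H ^ (2 * n) * m₁ ^ 2) := by gcongr
    _ = A * (H * r) ^ (2 * n) * m₁ ^ 2 := by ring

section AssociatedFunction

variable {ν : ℕ} {Mk : ℕ → ℝ} {A H r : ℝ}

lemma bddAbove_log_pow_div_of_factorial_le {C l : ℝ} (hMpos : ∀ k, 0 < Mk k) (hC : 0 ≤ C)
    (hl : 0 ≤ l) (hG : ∀ k : ℕ, (k.factorial : ℝ) ≤ C * l ^ k * Mk k) (hr : 0 < r) :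
    BddAbove (Set.range fun k : ℕ => log (r ^ (ν * k) / Mk (ν * k))) := by
  refine ⟨log (C * exp (l * r)), Set.forall_mem_range.2 fun k => ?_⟩
  exact log_le_log (div_pos (pow_pos hr _) (hMpos _)) <|
    pow_div_le_mul_exp_of_factorial_le hC (by positivity) hr.le (hMpos _) (hG _)

lemma pow_div_le_exp_assocM (hMpos : ∀ k, 0 < Mk k) (hr : 0 < r)
    (hbdd : BddAbove (Set.range fun k : ℕ => log (r ^ (ν * k) / Mk (ν * k)))) (k : ℕ) :
    r ^ (ν * k) / Mk (ν * k) ≤ exp (assocM ν Mk r) :=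
  (log_le_iff_le_exp (div_pos (pow_pos hr _) (hMpos _))).1 (le_ciSup hbdd k)

lemma exp_assocM_le {C : ℝ} (hMpos : ∀ k, 0 < Mk k) (hr : 0 < r)
    (hC : ∀ k : ℕ, r ^ (ν * k) / Mk (ν * k) ≤ C) : exp (assocM ν Mk r) ≤ C := by
  have hpos (k : ℕ) : 0 < r ^ (ν * k) / Mk (ν * k) := div_pos (pow_pos hr _) (hMpos _)
  rw [← le_log_iff_exp_le ((hpos 0).trans_le (hC 0))]
  exact ciSup_le fun k => log_le_log (hpos k) (hC k)

lemma exp_neg_assocM_le_div_pow (hMpos : ∀ k, 0 < Mk k) (hr : 0 < r)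
    (hbdd : BddAbove (Set.range fun k : ℕ => log (r ^ (ν * k) / Mk (ν * k)))) (p : ℕ) :
    exp (-assocM ν Mk r) ≤ Mk (ν * p) / r ^ (ν * p) := by
  rw [exp_neg, ← inv_div]
  exact inv_anti₀ (div_pos (pow_pos hr _) (hMpos _)) (pow_div_le_exp_assocM hMpos hr hbdd p)

lemma exp_assocM_sq_le (hMpos : ∀ k, 0 < Mk k) (hA : 0 ≤ A)
    (hM2 : ∀ k : ℕ, Mk (2 * k) ≤ A * H ^ (2 * k) * Mk k ^ 2) (hH : 0 < H) (hr : 0 < r)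
    (hbdd : BddAbove (Set.range fun k : ℕ => log ((H * r) ^ (ν * k) / Mk (ν * k)))) :
    exp (assocM ν Mk r) ^ 2 ≤ A * exp (assocM ν Mk (H * r)) := by
  rw [← le_sqrt' (exp_pos _)]
  refine exp_assocM_le hMpos hr fun k => le_sqrt_of_sq_le ?_
  calc (r ^ (ν * k) / Mk (ν * k)) ^ 2
      ≤ A * ((H * r) ^ (2 * (ν * k)) / Mk (2 * (ν * k))) :=
        sq_pow_div_le_mul_pow_div (hMpos _) (hMpos _) (hM2 _)
    _ = A * ((H * r) ^ (ν * (2 * k)) / Mk (ν * (2 * k))) := by rw [mul_left_comm]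
    _ ≤ A * exp (assocM ν Mk (H * r)) := by
        gcongr; exact pow_div_le_exp_assocM hMpos (mul_pos hH hr) hbdd (2 * k)

lemma exp_neg_assocM_mul_exp_assocM_le (hMpos : ∀ k, 0 < Mk k) (hA : 0 ≤ A)
    (hM2 : ∀ k : ℕ, Mk (2 * k) ≤ A * H ^ (2 * k) * Mk k ^ 2) (hH : 0 < H) (hr : 0 < r)
    (hbdd : BddAbove (Set.range fun k : ℕ => log ((H * r) ^ (ν * k) / Mk (ν * k)))) :
    exp (-assocM ν Mk (H * r)) * exp (assocM ν Mk r) ≤ A * exp (-assocM ν Mk r) := by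
  have hsq := exp_assocM_sq_le hMpos hA hM2 hH hr hbdd
  rw [exp_neg, exp_neg, inv_mul_eq_div, ← div_eq_mul_inv,
    div_le_div_iff₀ (exp_pos _) (exp_pos _), ← sq]
  exact hsq

end AssociatedFunction

theorem stmt_15_general {ι : Type*} {ν : ℕ} (hν : ν ≠ 0) {Mk : ℕ → ℝ} (hMpos : ∀ k, 0 < Mk k)
    {A H : ℝ} (hA : 0 ≤ A) (hH : 0 < H)
    (hM2 : ∀ k : ℕ, Mk (2 * k) ≤ A * H ^ (2 * k) * Mk k ^ 2)
    (hbdd : ∀ r : ℝ, 0 < r →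
      BddAbove (Set.range fun k : ℕ => log (r ^ (ν * k) / Mk (ν * k))))
    {lam : ι → ℝ} (hlam : ∀ i, 0 < lam i) {p : ℕ} (hp : Summable fun i => 1 / lam i ^ p)
    {b : ι → ℝ} (hb : ∀ i, 0 ≤ b i) {L K : ℝ} (hL : 0 < L)
    (hbK : ∀ i, b i ≤ K * exp (assocM ν Mk (L / H * lam i ^ (1 / (ν : ℝ))))) :
    Summable fun i => exp (-assocM ν Mk (L * lam i ^ (1 / (ν : ℝ)))) * b i := by
  refine .of_nonneg_of_le (fun i => mul_nonneg (exp_pos _).le (hb i)) (fun i => ?_)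
    (hp.mul_left (K * A * (Mk (ν * p) / (L / H) ^ (ν * p))))
  have hK : 0 ≤ K := nonneg_of_mul_nonneg_left ((hb i).trans (hbK i)) (exp_pos _)
  have hlam_root : (lam i ^ (1 / (ν : ℝ))) ^ (ν * p) = lam i ^ p := by
    rw [pow_mul, one_div, rpow_inv_natCast_pow (hlam i).le hν]
  set r := L / H * lam i ^ (1 / (ν : ℝ)) with hr_def
  have hr : 0 < r := mul_pos (div_pos hL hH) (rpow_pos_of_pos (hlam i) _)
  have hHr : L * lam i ^ (1 / (ν : ℝ)) = H * r := by rw [hr_def]; field_simp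
  calc exp (-assocM ν Mk (L * lam i ^ (1 / (ν : ℝ)))) * b i
      ≤ exp (-assocM ν Mk (H * r)) * (K * exp (assocM ν Mk r)) := by
        rw [hHr]; gcongr; exact hbK i
    _ = K * (exp (-assocM ν Mk (H * r)) * exp (assocM ν Mk r)) := by ring
    _ ≤ K * (A * exp (-assocM ν Mk r)) := by
        refine mul_le_mul_of_nonneg_left ?_ hK
        exact exp_neg_assocM_mul_exp_assocM_le hMpos hA hM2 hH hr (hbdd _ (mul_pos hH hr))
    _ ≤ K * (A * (Mk (ν * p) / r ^ (ν * p))) := by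
        gcongr; exact exp_neg_assocM_le_div_pow hMpos hr (hbdd r hr) p
    _ = K * A * (Mk (ν * p) / (L / H) ^ (ν * p)) * (1 / lam i ^ p) := by
        rw [hr_def, mul_pow, hlam_root]; ring

theorem stmt_15 (ν : ℕ) (hν : 1 ≤ ν) (Mk : ℕ → ℝ) (hMpos : ∀ k, 0 < Mk k)
    (hM0 : Mk 0 = 1)
    (A H : ℝ) (hA : 1 ≤ A) (hH : 1 ≤ H)
    (hM2 : ∀ k : ℕ, Mk (2 * k) ≤ A * H ^ (2 * k) * Mk k ^ 2)
    (hG : ∃ C₀ > (0 : ℝ), ∃ l > (0 : ℝ), ∀ k : ℕ, (k.factorial : ℝ) ≤ C₀ * l ^ k * Mk k)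
    (lam : ℕ → ℝ) (hlam : ∀ l, 0 < lam l) (hlb : ∀ l, lam 0 ≤ lam l)
    (p₀ : ℕ) (hp₀ : Summable (fun l => 1 / lam l ^ p₀))
    (b : ℕ → ℝ) (hb : ∀ l, 0 ≤ b l)
    (hbd : ∀ L : ℝ, 0 < L → ∃ K : ℝ, 0 < K ∧ ∀ l,
      b l ≤ K * Real.exp (assocM ν Mk (L * lam l ^ (1 / (ν : ℝ))))) :
    ∀ L : ℝ, 0 < L →
      Summable (fun l => Real.exp (-(assocM ν Mk (L * lam l ^ (1 / (ν : ℝ))))) * b l) := by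
  intro L hL
  obtain ⟨C, hC, l, hl, hG⟩ := hG
  obtain ⟨K, -, hbK⟩ := hbd (L / H) (by positivity)
  exact stmt_15_general (by lia) hMpos (by positivity) (by positivity) hM2
    (fun _ => bddAbove_log_pow_div_of_factorial_le hMpos hC.le hl.le hG) hlam hp₀ hb hL hbK
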